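/- arXiv:1302.4091 — 2 statements merged into one kernel-verified Lean document; each statement's English description precedes it below -/
import Mathlib

section
/- Under the parametrization (t, θ, u) ↦ g_t R_θ n_u of the set W = {(a b; c d) ∈ SL(2,ℝ) : d > 0, |bd| < 1/2}, the restriction to W of a suitably normalized Haar measure on SL(2,ℝ) is given by the density cos(2θ) dt dθ du on ℝ × (−π/4, π/4) × ℝ. -/
open Real MeasureTheory Matrix Set Filter

noncomputable def gMat (t : ℝ) : Matrix (Fin 2) (Fin 2) ℝ :=
  !![Real.exp t, 0; 0, Real.exp (-t)]

noncomputable def RMat (θ : ℝ) : Matrix (Fin 2) (Fin 2) ℝ :=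
  !![Real.cos θ, -Real.sin θ; Real.sin θ, Real.cos θ]

def nMat (u : ℝ) : Matrix (Fin 2) (Fin 2) ℝ := !![1, 0; u, 1]

noncomputable def NMat (a b : ℝ) : Matrix (Fin 2) (Fin 2) ℝ := !![a, b; 0, a⁻¹]

/-- Euclidean norm on ℝ². -/
noncomputable def vnorm (v : Fin 2 → ℝ) : ℝ := Real.sqrt (v 0 ^ 2 + v 1 ^ 2)

def e2 : Fin 2 → ℝ := ![0, 1]

/-- `J T θ = {t : ‖g_t R_θ e₂‖ < exp (-T)}`. -/
noncomputable def J (T θ : ℝ) : Set ℝ :=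
  {t | vnorm ((gMat t * RMat θ).mulVec e2) < Real.exp (-T)}

/-- The set `W` of matrices `(a b; c d)` in `SL(2,ℝ)` with `d > 0` and `|bd| < 1/2`. -/
def Wset : Set (Matrix (Fin 2) (Fin 2) ℝ) :=
  {A | A.det = 1 ∧ 0 < A 1 1 ∧ |A 0 1 * A 1 1| < 1 / 2}

instance : MeasurableSpace (Matrix (Fin 2) (Fin 2) ℝ) := by
  unfold Matrix; infer_instance

/-! A matrix `(a b; c d)` of determinant one with `d ≠ 0` is determined by its second column
`(b, d)` and the slope `w = c / d`. Left multiplication by `B ∈ SL(2, ℝ)` acts linearly on the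
column, with determinant one, and translates `w` by an amount depending only on `B` and the column;
hence `db dd dw` is a Haar measure, and every Haar measure is a multiple of it. In these coordinates
`g_t R_θ n_u` has column `(-e^t sin θ, e^(-t) cos θ)`, a function of `(t, θ)` with Jacobian
`-cos 2θ`, and slope `w = u + tan θ`, so `db dd dw = cos 2θ dt dθ du`. -/

section LeftInvariant

variable {G M : Type*} [Group G] [MeasurableSpace G] [Monoid M] [MeasurableSpace M]

theorem exists_eq_smul_of_isMulLeftInvariant [MeasurableMul₂ G] [MeasurableInv G]
    (μ ν : Measure G) [SigmaFinite μ] [SigmaFinite ν] [μ.IsMulLeftInvariant]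
    [ν.IsMulLeftInvariant] (hμ : μ ≠ 0) (hν : ν ≠ 0) :
    ∃ c : ENNReal, c ≠ 0 ∧ c ≠ ⊤ ∧ ν = c • μ := by
  have hμν : μ ≪ ν := absolutelyContinuous_of_isMulLeftInvariant μ ν hν
  have hνμ : ν ≪ μ := absolutelyContinuous_of_isMulLeftInvariant ν μ hμ
  obtain ⟨s, hs, -, hμs, hμs'⟩ := Measure.exists_subset_measure_lt_top MeasurableSet.univ
    (pos_iff_ne_zero.2 (Measure.measure_univ_ne_zero.2 hμ))
  obtain ⟨t, -, hts, hνt, hνt'⟩ := Measure.exists_subset_measure_lt_top hs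
    (pos_iff_ne_zero.2 fun h => hμs.ne' (hμν h))
  have hμt : μ t ≠ 0 := fun h => hνt.ne' (hνμ h)
  have hμt' : μ t ≠ ⊤ := measure_ne_top_of_subset hts hμs'.ne
  exact ⟨ν t / μ t, ENNReal.div_ne_zero.2 ⟨hνt.ne', hμt'⟩, ENNReal.div_ne_top hνt'.ne hμt,
    measure_eq_div_smul ν μ hμt hμt'⟩

variable {f : G →* M}

theorem isMulLeftInvariant_comap_of_forall_map_eq [MeasurableMul G] [MeasurableMul M]
    (hf : MeasurableEmbedding f) {μ : Measure M} (hμ : ∀ g, μ.map (f g * ·) = μ) :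
    (μ.comap f).IsMulLeftInvariant where
  map_mul_left_eq_self g := by
    ext s hs
    have himage : f '' ((g * ·) ⁻¹' s) = (f g * ·) ⁻¹' (f '' s) := by
      ext A
      constructor
      · rintro ⟨x, hx, rfl⟩
        exact ⟨g * x, hx, map_mul f g x⟩
      · rintro ⟨y, hy, hA⟩
        refine ⟨g⁻¹ * y, by simpa using hy, ?_⟩
        rw [map_mul, hA, ← mul_assoc, ← map_mul, inv_mul_cancel, map_one, one_mul]
    rw [Measure.map_apply (measurable_const_mul g) hs, hf.comap_apply, hf.comap_apply, himage,
      ← Measure.map_apply (measurable_const_mul (f g)) (hf.measurableSet_image.2 hs), hμ]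

theorem exists_eq_smul_of_ae_mem_range [MeasurableMul₂ G] [MeasurableInv G]
    [MeasurableMul M] (hf : MeasurableEmbedding f)
    (μ ν : Measure M) [SigmaFinite μ] [SigmaFinite ν] (hμ : μ ≠ 0) (hν : ν ≠ 0)
    (hμf : ∀ᵐ A ∂μ, A ∈ range f) (hνf : ∀ᵐ A ∂ν, A ∈ range f)
    (hμ_inv : ∀ g, μ.map (f g * ·) = μ) (hν_inv : ∀ g, ν.map (f g * ·) = ν) :
    ∃ c : ENNReal, c ≠ 0 ∧ c ≠ ⊤ ∧ ν = c • μ := by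
  have map_comap {ρ : Measure M} (h : ∀ᵐ A ∂ρ, A ∈ range f) : (ρ.comap f).map f = ρ := by
    rw [hf.map_comap, Measure.restrict_eq_self_of_ae_mem h]
  have sigmaFinite_comap {ρ : Measure M} [SigmaFinite ρ] (h : ∀ᵐ A ∂ρ, A ∈ range f) :
      SigmaFinite (ρ.comap f) :=
    SigmaFinite.of_map _ hf.measurable.aemeasurable (by rwa [map_comap h])
  have comap_ne_zero {ρ : Measure M} (h : ∀ᵐ A ∂ρ, A ∈ range f) (hρ : ρ ≠ 0) :
      ρ.comap f ≠ 0 := by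
    rwa [← Measure.map_ne_zero_iff hf.measurable.aemeasurable, map_comap h]
  have := sigmaFinite_comap hμf
  have := sigmaFinite_comap hνf
  have := isMulLeftInvariant_comap_of_forall_map_eq hf hμ_inv
  have := isMulLeftInvariant_comap_of_forall_map_eq hf hν_inv
  obtain ⟨c, hc, hc', h⟩ := exists_eq_smul_of_isMulLeftInvariant (μ.comap f) (ν.comap f)
    (comap_ne_zero hμf hμ) (comap_ne_zero hνf hν)
  refine ⟨c, hc, hc', ?_⟩
  rw [← map_comap hνf, h, Measure.map_smul, map_comap hμf]

end LeftInvariant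

section MeasurePreserving

theorem measurePreserving_withDensity {α β : Type*} [MeasurableSpace α] [MeasurableSpace β]
    {μ : Measure α} {ν : Measure β} {f : α → β} (hf : MeasurePreserving f μ ν)
    {ρ : β → ENNReal} (hρ : Measurable ρ) :
    MeasurePreserving f (μ.withDensity (ρ ∘ f)) (ν.withDensity ρ) := by
  refine ⟨hf.measurable, ?_⟩
  ext s hs
  rw [Measure.map_apply hf.measurable hs, withDensity_apply _ (hf.measurable hs),
    withDensity_apply _ hs]
  exact hf.setLIntegral_comp_preimage hs hρ

theorem measurePreserving_of_linearMap_det_eq_one {E : Type*} [NormedAddCommGroup E]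
    [NormedSpace ℝ E] [FiniteDimensional ℝ E] [MeasurableSpace E] [BorelSpace E]
    (μ : Measure E) [μ.IsAddHaarMeasure] {f : E →ₗ[ℝ] E} (hf : LinearMap.det f = 1) :
    MeasurePreserving f μ μ := by
  refine ⟨f.continuous_of_finiteDimensional.measurable, ?_⟩
  rw [Measure.map_linearMap_addHaar_eq_smul_addHaar μ (by simp [hf]), hf]
  simp

theorem measurePreserving_prodMk_add_right {α β E : Type*} [MeasurableSpace α] [MeasurableSpace β]
    [MeasurableSpace E] [AddGroup E] [MeasurableAdd₂ E]
    {μ : Measure α} {ν : Measure β} [SFinite μ] (ρ : Measure E) [SFinite ρ]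
    [ρ.IsAddRightInvariant] {f : α → β} (hf : MeasurePreserving f μ ν)
    {φ : α → E} (hφ : Measurable φ) :
    MeasurePreserving (fun p : α × E => (f p.1, p.2 + φ p.1)) (μ.prod ρ) (ν.prod ρ) :=
  hf.skew_product (g := fun x w => w + φ x)
    (measurable_snd.add (hφ.comp measurable_fst))
    (.of_forall fun x => (measurePreserving_add_right ρ (φ x)).map_eq)

end MeasurePreserving

section SpecialLinear

instance : BorelSpace (Matrix (Fin 2) (Fin 2) ℝ) :=
  inferInstanceAs (BorelSpace (Fin 2 → Fin 2 → ℝ))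

instance : SecondCountableTopology (Matrix (Fin 2) (Fin 2) ℝ) :=
  inferInstanceAs (SecondCountableTopology (Fin 2 → Fin 2 → ℝ))

instance : SigmaCompactSpace (Matrix (Fin 2) (Fin 2) ℝ) :=
  inferInstanceAs (SigmaCompactSpace (Fin 2 → Fin 2 → ℝ))

instance : MeasurableSpace (SpecialLinearGroup (Fin 2) ℝ) :=
  inferInstanceAs (MeasurableSpace (Subtype _))

instance : BorelSpace (SpecialLinearGroup (Fin 2) ℝ) :=
  inferInstanceAs (BorelSpace (Subtype _))

instance : SecondCountableTopology (SpecialLinearGroup (Fin 2) ℝ) :=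
  SpecialLinearGroup.isClosedEmbedding_val.isEmbedding.secondCountableTopology

theorem exists_eq_smul_of_forall_map_mul_left_eq (μ ν : Measure (Matrix (Fin 2) (Fin 2) ℝ))
    [SigmaFinite μ] [SigmaFinite ν] (hμ : μ ≠ 0) (hν : ν ≠ 0)
    (hμ_det : ∀ᵐ A ∂μ, A.det = 1) (hν_det : ∀ᵐ A ∂ν, A.det = 1)
    (hμ_inv : ∀ B : Matrix (Fin 2) (Fin 2) ℝ, B.det = 1 → μ.map (B * ·) = μ)
    (hν_inv : ∀ B : Matrix (Fin 2) (Fin 2) ℝ, B.det = 1 → ν.map (B * ·) = ν) :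
    ∃ c : ENNReal, c ≠ 0 ∧ c ≠ ⊤ ∧ ν = c • μ := by
  have hval : Topology.IsClosedEmbedding
      (SpecialLinearGroup.coeMonoidHom : SpecialLinearGroup (Fin 2) ℝ →* _) :=
    SpecialLinearGroup.isClosedEmbedding_val
  have hrange (A : Matrix (Fin 2) (Fin 2) ℝ) (hA : A.det = 1) :
      A ∈ range (SpecialLinearGroup.coeMonoidHom : SpecialLinearGroup (Fin 2) ℝ →* _) :=
    ⟨⟨A, hA⟩, rfl⟩
  exact exists_eq_smul_of_ae_mem_range hval.measurableEmbedding μ ν hμ hν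
    (hμ_det.mono hrange) (hν_det.mono hrange)
    (fun B => hμ_inv _ B.2) (fun B => hν_inv _ B.2)

end SpecialLinear

section Cell

variable {A B : Matrix (Fin 2) (Fin 2) ℝ} {p : (ℝ × ℝ) × ℝ}

/-- The parametrization `((b, d), w) ↦ (d⁻¹ b; 0 d) * (1 0; w 1)` of the open cell `d ≠ 0` of
`SL(2, ℝ)` by the second column `(b, d)` and the slope `w = c / d`. -/
noncomputable def cellMat (p : (ℝ × ℝ) × ℝ) : Matrix (Fin 2) (Fin 2) ℝ :=
  NMat p.1.2⁻¹ p.1.1 * nMat p.2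

/-- The coordinates `((b, d), c / d)` of a matrix `(a b; c d)` of determinant one with `d ≠ 0`,
inverse to `cellMat`. -/
noncomputable def cellCoords (A : Matrix (Fin 2) (Fin 2) ℝ) : (ℝ × ℝ) × ℝ :=
  ((A 0 1, A 1 1), A 1 0 / A 1 1)

theorem cellMat_eq (p : (ℝ × ℝ) × ℝ) :
    cellMat p = !![p.1.2⁻¹ + p.1.1 * p.2, p.1.1; p.1.2 * p.2, p.1.2] := by
  simp [cellMat, NMat, nMat]

theorem det_cellMat (hp : p.1.2 ≠ 0) : (cellMat p).det = 1 := by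
  rw [cellMat_eq, det_fin_two_of]
  field_simp
  ring

theorem cellMat_mul_nMat (q : ℝ × ℝ) (w u : ℝ) :
    cellMat (q, w) * nMat u = cellMat (q, w + u) := by
  simp [cellMat, nMat, mul_assoc]

theorem cellMat_cellCoords (hA : A.det = 1) (hd : A 1 1 ≠ 0) : cellMat (cellCoords A) = A := by
  rw [det_fin_two] at hA
  rw [cellMat_eq, cellCoords, A.eta_fin_two]
  congrm !![?_, _; ?_, _]
  · simp only [of_apply, cons_val]
    field_simp
    linear_combination -hA
  · simp only [of_apply, cons_val]
    field_simp

theorem cellCoords_cellMat (hp : p.1.2 ≠ 0) : cellCoords (cellMat p) = p := by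
  simp [cellMat_eq, cellCoords, hp]

theorem measurable_cellMat : Measurable cellMat := by
  unfold cellMat NMat nMat
  fun_prop

theorem measurable_cellCoords : Measurable cellCoords := by
  unfold cellCoords
  fun_prop

/-- The linear action of a matrix on column vectors, written as pairs. -/
noncomputable def colAction (B : Matrix (Fin 2) (Fin 2) ℝ) : ℝ × ℝ →ₗ[ℝ] ℝ × ℝ :=
  toLin (.finTwoProd ℝ) (.finTwoProd ℝ) B

theorem colAction_apply (B : Matrix (Fin 2) (Fin 2) ℝ) (q : ℝ × ℝ) :
    colAction B q = (B 0 0 * q.1 + B 0 1 * q.2, B 1 0 * q.1 + B 1 1 * q.2) := by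
  rw [colAction, ← toLin_finTwoProd_apply, ← B.eta_fin_two]

theorem measurePreserving_colAction (hB : B.det = 1) : MeasurePreserving (colAction B) :=
  measurePreserving_of_linearMap_det_eq_one volume (by rw [colAction, LinearMap.det_toLin, hB])

theorem cellCoords_mul_cellMat (B : Matrix (Fin 2) (Fin 2) ℝ) (q : ℝ × ℝ) :
    cellCoords (B * cellMat (q, 0)) =
      (colAction B q, B 1 0 / (q.2 * (colAction B q).2)) := by
  simp only [cellCoords, cellMat_eq, colAction_apply, Matrix.mul_apply, Fin.sum_univ_two,
    of_apply, cons_val, mul_zero, add_zero]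
  rw [div_mul_eq_div_div, div_eq_mul_inv (B 1 0)]

theorem mul_cellMat (hB : B.det = 1) (hp : p.1.2 ≠ 0) (hBp : (colAction B p.1).2 ≠ 0) :
    B * cellMat p =
      cellMat (colAction B p.1, p.2 + B 1 0 / (p.1.2 * (colAction B p.1).2)) := by
  obtain ⟨q, w⟩ := p
  have hcoords := cellCoords_mul_cellMat B q
  have hdet : (B * cellMat (q, 0)).det = 1 := by
    rw [det_mul, hB, one_mul, det_cellMat (p := (q, 0)) hp]
  have hd : (B * cellMat (q, 0)) 1 1 = (colAction B q).2 := congrArg (·.1.2) hcoords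
  calc B * cellMat (q, w)
      = B * cellMat (q, 0) * nMat w := by rw [mul_assoc, cellMat_mul_nMat, zero_add]
    _ = cellMat (cellCoords (B * cellMat (q, 0))) * nMat w := by
        rw [cellMat_cellCoords hdet (by rwa [hd])]
    _ = _ := by rw [hcoords, cellMat_mul_nMat, add_comm]

end Cell

section Haar

/-- The Haar measure `db dd dw` of `SL(2, ℝ)` in the coordinates `cellMat`, as a measure on
`2 × 2` matrices; the complement `d = 0` of the cell is null. -/
noncomputable def slHaar : Measure (Matrix (Fin 2) (Fin 2) ℝ) :=
  Measure.map cellMat volume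

theorem ae_snd_fst_ne_zero : ∀ᵐ p : (ℝ × ℝ) × ℝ, p.1.2 ≠ 0 :=
  (Measure.quasiMeasurePreserving_snd.comp Measure.quasiMeasurePreserving_fst).ae
    (Measure.ae_ne volume 0)

theorem ae_slHaar_det_eq_one : ∀ᵐ A ∂slHaar, A.det = 1 := by
  rw [slHaar, ae_map_iff measurable_cellMat.aemeasurable
    (measurableSet_eq_fun (by fun_prop) measurable_const)]
  exact ae_snd_fst_ne_zero.mono fun p hp => det_cellMat hp

theorem map_cellCoords_slHaar : slHaar.map cellCoords = volume := by
  rw [slHaar, Measure.map_map measurable_cellCoords measurable_cellMat]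
  refine (Measure.map_congr ?_).trans Measure.map_id
  exact ae_snd_fst_ne_zero.mono fun p hp => cellCoords_cellMat hp

instance : SigmaFinite slHaar :=
  SigmaFinite.of_map _ measurable_cellCoords.aemeasurable
    (by rw [map_cellCoords_slHaar]; infer_instance)

theorem slHaar_ne_zero : slHaar ≠ 0 :=
  (Measure.map_ne_zero_iff measurable_cellMat.aemeasurable).2 (NeZero.ne volume)

theorem map_mul_left_slHaar {B : Matrix (Fin 2) (Fin 2) ℝ} (hB : B.det = 1) :
    slHaar.map (B * ·) = slHaar := by
  have hskew : MeasurePreserving fun p : (ℝ × ℝ) × ℝ =>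
      (colAction B p.1, p.2 + B 1 0 / (p.1.2 * (colAction B p.1).2)) :=
    measurePreserving_prodMk_add_right volume (measurePreserving_colAction hB)
      (φ := fun q => B 1 0 / (q.2 * (colAction B q).2))
      (by simp only [colAction_apply]; fun_prop)
  have hne : ∀ᵐ p : (ℝ × ℝ) × ℝ, (colAction B p.1).2 ≠ 0 :=
    hskew.quasiMeasurePreserving.ae ae_snd_fst_ne_zero
  calc slHaar.map (B * ·)
      = Measure.map ((B * ·) ∘ cellMat) volume :=
        Measure.map_map (measurable_const_mul B) measurable_cellMat
    _ = Measure.map (cellMat ∘ _) volume := Measure.map_congr <| by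
        filter_upwards [ae_snd_fst_ne_zero, hne] with p hp hBp using mul_cellMat hB hp hBp
    _ = slHaar := by
        rw [← Measure.map_map measurable_cellMat hskew.measurable, hskew.map_eq, slHaar]

end Haar

section Chart

/-- The second column `(b, d)` of `g_t R_θ`, as a function of `(t, θ)`. -/
noncomputable def gRCol (p : ℝ × ℝ) : ℝ × ℝ :=
  (-(exp p.1 * sin p.2), exp (-p.1) * cos p.2)

/-- The range of the parameters `(t, θ)`. -/
def chartStrip : Set (ℝ × ℝ) := univ ×ˢ Ioo (-(π / 4)) (π / 4)

/-- The set of second columns `(b, d)` of the matrices in `Wset`. -/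
def colRegion : Set (ℝ × ℝ) := {q | 0 < q.2 ∧ |q.1 * q.2| < 1 / 2}

/-- The measure `cos 2θ dt dθ` on the range of the parameters `(t, θ)`. -/
noncomputable def chartMeasure : Measure (ℝ × ℝ) :=
  (volume.restrict chartStrip).withDensity fun p => ENNReal.ofReal (cos (2 * p.2))

instance : SFinite chartMeasure := by
  unfold chartMeasure
  infer_instance

theorem measurableSet_chartStrip : MeasurableSet chartStrip :=
  MeasurableSet.univ.prod measurableSet_Ioo

theorem cos_two_mul_pos_of_mem_chartStrip {p : ℝ × ℝ} (hp : p ∈ chartStrip) :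
    0 < cos (2 * p.2) :=
  cos_pos_of_mem_Ioo ⟨by linarith [hp.2.1], by linarith [hp.2.2]⟩

theorem cos_pos_of_mem_chartStrip {p : ℝ × ℝ} (hp : p ∈ chartStrip) : 0 < cos p.2 :=
  cos_pos_of_mem_Ioo ⟨by linarith [hp.2.1, pi_pos], by linarith [hp.2.2, pi_pos]⟩

theorem exp_mul_exp_neg (x : ℝ) : exp x * exp (-x) = 1 := by
  rw [← exp_add, add_neg_cancel, exp_zero]

theorem gRCol_fst_mul_snd (p : ℝ × ℝ) : (gRCol p).1 * (gRCol p).2 = -sin (2 * p.2) / 2 := by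
  rw [gRCol, sin_two_mul]
  linear_combination -sin p.2 * cos p.2 * exp_mul_exp_neg p.1

theorem mapsTo_gRCol : MapsTo gRCol chartStrip colRegion := by
  intro p hp
  refine ⟨mul_pos (exp_pos _) (cos_pos_of_mem_chartStrip hp), ?_⟩
  have hsin : |sin (2 * p.2)| < 1 := by
    have hcos := cos_two_mul_pos_of_mem_chartStrip hp
    rw [← sq_lt_one_iff_abs_lt_one, sin_sq]
    linarith [pow_pos hcos 2]
  rw [gRCol_fst_mul_snd, abs_div, abs_neg, abs_two]
  linarith

theorem injOn_gRCol : InjOn gRCol chartStrip := by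
  rintro ⟨s, φ⟩ hp ⟨t, θ⟩ hq hpq
  have hsin : sin (2 * φ) = sin (2 * θ) := by
    have h := gRCol_fst_mul_snd (s, φ)
    rw [hpq, gRCol_fst_mul_snd] at h
    linarith
  obtain rfl : φ = θ := by
    have h := injOn_sin ⟨by linarith [hp.2.1], by linarith [hp.2.2]⟩
      ⟨by linarith [hq.2.1], by linarith [hq.2.2]⟩ hsin
    linarith
  have hexp : exp (-s) = exp (-t) :=
    mul_right_cancel₀ (cos_pos_of_mem_chartStrip hp).ne' (congrArg Prod.snd hpq)
  rw [neg_injective (exp_injective hexp)]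

theorem surjOn_gRCol : SurjOn gRCol chartStrip colRegion := by
  rintro ⟨b, d⟩ ⟨hd : 0 < d, hbd⟩
  obtain ⟨hbd₁, hbd₂⟩ : -(1 / 2) < b * d ∧ b * d < 1 / 2 := abs_lt.1 hbd
  obtain ⟨θ, hθ⟩ : ∃ θ, 2 * θ = arcsin (-(2 * (b * d))) :=
    ⟨arcsin (-(2 * (b * d))) / 2, by ring⟩
  have hθ_lt : 2 * θ < π / 2 := hθ ▸ arcsin_lt_pi_div_two.2 (by linarith)
  have hθ_gt : -(π / 2) < 2 * θ := hθ ▸ neg_pi_div_two_lt_arcsin.2 (by linarith)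
  have hsin : sin (2 * θ) = -(2 * (b * d)) := by
    rw [hθ, sin_arcsin (by linarith) (by linarith)]
  have hmem : (log (cos θ / d), θ) ∈ chartStrip :=
    ⟨trivial, by simp only; linarith, by simp only; linarith⟩
  have hcos : 0 < cos θ := cos_pos_of_mem_chartStrip hmem
  rw [sin_two_mul] at hsin
  refine ⟨_, hmem, Prod.ext ?_ ?_⟩
  · simp only [gRCol, exp_log (div_pos hcos hd)]
    field_simp
    linarith
  · simp only [gRCol, exp_neg, exp_log (div_pos hcos hd)]
    field_simp

/-- The derivative of `gRCol`. -/
noncomputable def gRColDeriv (p : ℝ × ℝ) : ℝ × ℝ →L[ℝ] ℝ × ℝ :=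
  (toLin (.finTwoProd ℝ) (.finTwoProd ℝ)
    !![-(exp p.1 * sin p.2), -(exp p.1 * cos p.2);
      -(exp (-p.1) * cos p.2), -(exp (-p.1) * sin p.2)]).toContinuousLinearMap

theorem hasFDerivAt_gRCol (p : ℝ × ℝ) : HasFDerivAt gRCol (gRColDeriv p) p := by
  have ht : HasFDerivAt (fun p : ℝ × ℝ => p.1) (.fst ℝ ℝ ℝ) p := hasFDerivAt_fst
  have hθ : HasFDerivAt (fun p : ℝ × ℝ => p.2) (.snd ℝ ℝ ℝ) p := hasFDerivAt_snd
  have hcol := (ht.exp.mul hθ.sin).neg.prodMk (ht.neg.exp.mul hθ.cos)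
  refine hcol.congr_fderiv ?_
  rw [gRColDeriv, toLin_finTwoProd_toContinuousLinearMap]
  ext <;> simp <;> ring

theorem det_gRColDeriv (p : ℝ × ℝ) : (gRColDeriv p).det = -cos (2 * p.2) := by
  rw [gRColDeriv, LinearMap.det_toContinuousLinearMap, LinearMap.det_toLin, det_fin_two_of,
    cos_two_mul']
  linear_combination (sin p.2 ^ 2 - cos p.2 ^ 2) * exp_mul_exp_neg p.1

theorem measurePreserving_gRCol :
    MeasurePreserving gRCol chartMeasure (volume.restrict colRegion) := by
  refine ⟨by unfold gRCol; fun_prop, ?_⟩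
  have himage : gRCol '' chartStrip = colRegion :=
    surjOn_gRCol.image_eq_of_mapsTo mapsTo_gRCol
  rw [← himage, ← map_withDensity_abs_det_fderiv_eq_addHaar volume
    measurableSet_chartStrip.nullMeasurableSet
    (fun p _ => (hasFDerivAt_gRCol p).hasFDerivWithinAt) injOn_gRCol, chartMeasure]
  congr 1
  refine withDensity_congr_ae ?_
  filter_upwards [ae_restrict_mem measurableSet_chartStrip] with p hp
  rw [det_gRColDeriv, abs_neg, abs_of_pos (cos_two_mul_pos_of_mem_chartStrip hp)]

theorem ae_chartMeasure_mem_chartStrip : ∀ᵐ p ∂chartMeasure, p ∈ chartStrip :=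
  (withDensity_absolutelyContinuous _ _).ae_le (ae_restrict_mem measurableSet_chartStrip)

theorem measurePreserving_prodAssoc_chartMeasure :
    MeasurePreserving MeasurableEquiv.prodAssoc (chartMeasure.prod volume)
      ((volume.restrict (univ ×ˢ Ioo (-(π / 4)) (π / 4) ×ˢ univ)).withDensity
        fun p : ℝ × ℝ × ℝ => ENNReal.ofReal (cos (2 * p.2.1))) := by
  have hprod : chartMeasure.prod (volume : Measure ℝ) =
      (volume.restrict (MeasurableEquiv.prodAssoc ⁻¹'
        (univ ×ˢ Ioo (-(π / 4)) (π / 4) ×ˢ univ))).withDensity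
        ((fun p : ℝ × ℝ × ℝ => ENNReal.ofReal (cos (2 * p.2.1))) ∘ MeasurableEquiv.prodAssoc) := by
    rw [chartMeasure, prod_withDensity_left (by fun_prop),
      ← Measure.restrict_univ (μ := (volume : Measure ℝ)), Measure.prod_restrict,
      ← Measure.volume_eq_prod, chartStrip, ← Equiv.prod_assoc_preimage]
    rfl
  rw [hprod]
  exact measurePreserving_withDensity (volume_preserving_prodAssoc.restrict_preimage
    (MeasurableSet.univ.prod (measurableSet_Ioo.prod MeasurableSet.univ))) (by fun_prop)

theorem g_mul_R_mul_n {t θ : ℝ} (hθ : cos θ ≠ 0) (u : ℝ) :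
    gMat t * RMat θ * nMat u = cellMat (gRCol (t, θ), u + tan θ) := by
  have hcoords : cellCoords (gMat t * RMat θ) = (gRCol (t, θ), tan θ) := by
    simp [cellCoords, gMat, RMat, gRCol, mul_div_mul_left, tan_eq_sin_div_cos]
  have hdet : (gMat t * RMat θ).det = 1 := by
    have hg : (gMat t).det = 1 := by simp [gMat, ← exp_add]
    have hR : (RMat θ).det = 1 := by simp [RMat, ← sq]
    rw [det_mul, hg, hR, one_mul]
  have hd : (gMat t * RMat θ) 1 1 ≠ 0 := by simp [gMat, RMat, hθ]
  rw [← cellMat_cellCoords hdet hd, hcoords, cellMat_mul_nMat, add_comm]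

theorem measurableSet_Wset : MeasurableSet Wset := by
  have hdet : MeasurableSet {A : Matrix (Fin 2) (Fin 2) ℝ | A.det = 1} :=
    measurableSet_eq_fun (by fun_prop) measurable_const
  have hpos : MeasurableSet {A : Matrix (Fin 2) (Fin 2) ℝ | 0 < A 1 1} :=
    measurableSet_lt measurable_const (by fun_prop)
  have habs : MeasurableSet {A : Matrix (Fin 2) (Fin 2) ℝ | |A 0 1 * A 1 1| < 1 / 2} :=
    measurableSet_lt (by fun_prop) measurable_const
  exact hdet.inter (hpos.inter habs)

theorem cellMat_preimage_Wset : cellMat ⁻¹' Wset = colRegion ×ˢ univ := by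
  ext p
  have hcol : cellMat p 0 1 = p.1.1 ∧ cellMat p 1 1 = p.1.2 := by simp [cellMat_eq]
  simp only [mem_preimage, Wset, mem_ofPred_eq, hcol, colRegion, mem_prod, mem_univ, and_true,
    and_iff_right_iff_imp]
  exact fun h => det_cellMat h.1.ne'

theorem measurePreserving_cellMat_Wset :
    MeasurePreserving cellMat ((volume.restrict colRegion).prod volume)
      (slHaar.restrict Wset) := by
  have hcell : MeasurePreserving cellMat volume slHaar := ⟨measurable_cellMat, rfl⟩
  have h := hcell.restrict_preimage measurableSet_Wset
  rwa [cellMat_preimage_Wset, Measure.volume_eq_prod, ← Measure.prod_restrict,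
    Measure.restrict_univ] at h

theorem map_g_mul_R_mul_n :
    Measure.map (fun p : ℝ × ℝ × ℝ => gMat p.1 * RMat p.2.1 * nMat p.2.2)
      ((volume.restrict (univ ×ˢ Ioo (-(π / 4)) (π / 4) ×ˢ univ)).withDensity
        fun p => ENNReal.ofReal (cos (2 * p.2.1))) = slHaar.restrict Wset := by
  have hchart : Measurable fun p : ℝ × ℝ × ℝ => gMat p.1 * RMat p.2.1 * nMat p.2.2 := by
    unfold gMat RMat nMat
    fun_prop
  have hcell := measurePreserving_cellMat_Wset.comp
    (measurePreserving_prodMk_add_right volume measurePreserving_gRCol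
      (φ := fun p => tan p.2) (by simp only [tan_eq_sin_div_cos]; fun_prop))
  rw [← measurePreserving_prodAssoc_chartMeasure.map_eq,
    Measure.map_map hchart MeasurableEquiv.prodAssoc.measurable, ← hcell.map_eq]
  refine Measure.map_congr ?_
  filter_upwards [Measure.quasiMeasurePreserving_fst.ae ae_chartMeasure_mem_chartStrip]
    with p hp using g_mul_R_mul_n (cos_pos_of_mem_chartStrip hp).ne' p.2

end Chart

theorem stmt3_general (μ : Measure (Matrix (Fin 2) (Fin 2) ℝ)) [SigmaFinite μ]
    (hμ0 : μ ≠ 0)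
    (hsupp : μ {A | A.det ≠ 1} = 0)
    (hinv : ∀ B : Matrix (Fin 2) (Fin 2) ℝ, B.det = 1 →
      Measure.map (fun A => B * A) μ = μ) :
    ∃ c : ℝ, 0 < c ∧
      Measure.map (fun p : ℝ × ℝ × ℝ => gMat p.1 * RMat p.2.1 * nMat p.2.2)
        ((volume.restrict (Set.univ ×ˢ Set.Ioo (-(π / 4)) (π / 4) ×ˢ Set.univ)).withDensity
          fun p => ENNReal.ofReal (Real.cos (2 * p.2.1)))
        = ENNReal.ofReal c • μ.restrict Wset := by
  obtain ⟨c, hc, hc', hslHaar⟩ := exists_eq_smul_of_forall_map_mul_left_eq μ slHaar hμ0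
    slHaar_ne_zero (ae_iff.2 hsupp) ae_slHaar_det_eq_one hinv fun B => map_mul_left_slHaar
  refine ⟨c.toReal, ENNReal.toReal_pos hc hc', ?_⟩
  rw [map_g_mul_R_mul_n, hslHaar, Measure.restrict_smul, ENNReal.ofReal_toReal hc']

/-- Proposition 3.1 (second assertion): in the coordinates `(t, θ, u) ↦ g_t R_θ n_u`
on `W`, a suitably scaled Haar measure of `SL(2,ℝ)` (modelled as a nonzero measure on
`2×2` matrices, carried by the set `{det = 1}`, finite on compact sets, and invariant
under left translation by `SL(2,ℝ)`) restricted to `W` is `cos 2θ dt dθ du`. -/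
theorem stmt3 (μ : Measure (Matrix (Fin 2) (Fin 2) ℝ))
    (hμ0 : μ ≠ 0)
    (hsupp : μ {A | A.det ≠ 1} = 0)
    (hcpt : ∀ K : Set (Matrix (Fin 2) (Fin 2) ℝ), IsCompact K → μ K < ⊤)
    (hinv : ∀ B : Matrix (Fin 2) (Fin 2) ℝ, B.det = 1 →
      Measure.map (fun A => B * A) μ = μ) :
    ∃ c : ℝ, 0 < c ∧
      Measure.map (fun p : ℝ × ℝ × ℝ => gMat p.1 * RMat p.2.1 * nMat p.2.2)
        ((volume.restrict (Set.univ ×ˢ Set.Ioo (-(π / 4)) (π / 4) ×ˢ Set.univ)).withDensity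
          fun p => ENNReal.ofReal (Real.cos (2 * p.2.1)))
        = ENNReal.ofReal c • μ.restrict Wset := by
  have : IsFiniteMeasureOnCompacts μ := ⟨fun K hK => hcpt K hK⟩
  exact stmt3_general μ hμ0 hsupp hinv
end

section
/- Let v, v' ∈ ℝ² with v ≠ ±v'. For τ > 0, let E(v, v', τ) be the set of γ ∈ SL(2,ℝ) with operator norm ‖γ‖ ≤ 2 and exp(−τ) ≤ ‖γ·v‖ ≤ exp(τ) and exp(−τ) ≤ ‖γ·v'‖ ≤ exp(τ). Then for every δ > 0 there is a constant C (depending only on δ) such that whenever ‖v − v'‖ ≥ δ and ‖v + v'‖ ≥ δ, the Haar measure of E(v, v', τ) is at most C · τ^{3/2} for all sufficiently small τ > 0. -/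
open Real MeasureTheory Matrix Set Filter

/-- Operator norm of a `2×2` real matrix acting on Euclidean `ℝ²`. -/
noncomputable def opNorm (A : Matrix (Fin 2) (Fin 2) ℝ) : ℝ :=
  ‖Matrix.toEuclideanCLM (𝕜 := ℝ) A‖

/-- The set `E(v, v', τ)` of `γ ∈ SL(2,ℝ)` with `‖γ‖ ≤ 2` and
`exp(-τ) ≤ ‖γ·v‖, ‖γ·v'‖ ≤ exp τ`. -/
noncomputable def Eset (v v' : Fin 2 → ℝ) (τ : ℝ) : Set (Matrix (Fin 2) (Fin 2) ℝ) :=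
  {γ | γ.det = 1 ∧ opNorm γ ≤ 2 ∧
    Real.exp (-τ) ≤ vnorm (γ.mulVec v) ∧ vnorm (γ.mulVec v) ≤ Real.exp τ ∧
    Real.exp (-τ) ≤ vnorm (γ.mulVec v') ∧ vnorm (γ.mulVec v') ≤ Real.exp τ}

/-!
Let `d = v ∧ v'`. A matrix `γ` of determinant one is determined by the pair `(p, q) = (γ v, γ v')`
of complex numbers, which satisfies `Im (q / p) = d / |p|²`. On `E(v, v', τ)` both `|p|` and `|q|`
are `1 + O(τ)`, so `w = q / p` has `|w|² = 1 + O(τ)` and `Im w = d + O(τ)`, and hence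
`(Re w)² = 1 - d² + O(τ)`: the imaginary part of `w` varies in an interval of length `O(τ)` and its
real part in a set of measure `O(√τ)`, whence the exponent `3/2`.

Haar measure enters through the cone `{t γ | γ ∈ E, 0 < t < √2}` only: averaging left translates
over a neighbourhood of the identity bounds `μ E` by the Lebesgue measure of the cone, which
right multiplication by unimodular matrices preserves. Finally, `d` is bounded away from zero since
`|p - q|² |p + q|² = (|p|² - |q|²)² + 4 d²` and `|γ u| ≥ |u| / ‖γ‖`.
-/

/-! ### Volumes in the plane -/

lemma abs_sub_one_le_of_abs_log_le {x s : ℝ} (hx : 0 < x) (hlog : |log x| ≤ s) (hs : s ≤ 1) :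
    |x - 1| ≤ 2 * s := by
  have h := abs_exp_sub_one_le (hlog.trans hs)
  rw [exp_log hx] at h
  linarith

lemma volume_setOf_abs_sq_sub_le (s h : ℝ) :
    volume {x : ℝ | |x ^ 2 - s| ≤ h} ≤ ENNReal.ofReal (2 * √(2 * h)) := by
  set S := {x : ℝ | |x ^ 2 - s| ≤ h}
  have volume_le_of_same_sign {T : Set ℝ} (hTS : T ⊆ S) (hT : ∀ x ∈ T, ∀ y ∈ T, 0 ≤ x * y) :
      volume T ≤ ENNReal.ofReal √(2 * h) := by
    refine (Real.volume_le_diam T).trans (Metric.ediam_le fun x hx y hy ↦ ?_)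
    have hsq : (x - y) ^ 2 ≤ |x ^ 2 - y ^ 2| := by
      have hle : |x - y| ≤ |x + y| := by
        rw [← sq_le_sq]
        linarith [hT x hx y hy]
      rw [← sq_abs, sq_sub_sq, abs_mul, sq]
      gcongr
    have htriangle := abs_sub_le (x ^ 2) s (y ^ 2)
    rw [abs_sub_comm s] at htriangle
    have hx' : |x ^ 2 - s| ≤ h := hTS hx
    have hy' : |y ^ 2 - s| ≤ h := hTS hy
    rw [edist_dist, Real.dist_eq]
    exact ENNReal.ofReal_le_ofReal (Real.abs_le_sqrt (by linarith))
  calc volume S ≤ volume (S ∩ Ici 0 ∪ S ∩ Iic 0) := by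
        rw [← inter_union_distrib_left, union_comm, Iic_union_Ici, inter_univ]
    _ ≤ volume (S ∩ Ici 0) + volume (S ∩ Iic 0) := measure_union_le _ _
    _ ≤ ENNReal.ofReal √(2 * h) + ENNReal.ofReal √(2 * h) := by
        gcongr
        · exact volume_le_of_same_sign inter_subset_left fun x hx y hy ↦ mul_nonneg hx.2 hy.2
        · exact volume_le_of_same_sign inter_subset_left fun x hx y hy ↦
            mul_nonneg_of_nonpos_of_nonpos hx.2 hy.2
    _ = ENNReal.ofReal (2 * √(2 * h)) := by
        rw [← ENNReal.ofReal_add (by positivity) (by positivity), ← two_mul]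

lemma volume_setOf_normSq_im_near_le (s d h a : ℝ) :
    volume {w : ℂ | |‖w‖ ^ 2 - s| ≤ h ∧ |w.im - d| ≤ a} ≤
      ENNReal.ofReal (2 * √(2 * (h + a * (2 * |d| + a)))) * ENNReal.ofReal (2 * a) := by
  set R := {x : ℝ | |x ^ 2 - (s - d ^ 2)| ≤ h + a * (2 * |d| + a)}
  have hsub : {w : ℂ | |‖w‖ ^ 2 - s| ≤ h ∧ |w.im - d| ≤ a} ⊆
      Complex.measurableEquivRealProd ⁻¹' (R ×ˢ Metric.closedBall d a) := by
    rintro w ⟨hnorm, him⟩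
    refine ⟨?_, him⟩
    have hsum : |w.im + d| ≤ 2 * |d| + a :=
      calc |w.im + d| = |(w.im - d) + 2 * d| := by ring_nf
        _ ≤ |w.im - d| + |2 * d| := abs_add_le _ _
        _ ≤ 2 * |d| + a := by rw [abs_mul, abs_two]; linarith
    change |w.re ^ 2 - (s - d ^ 2)| ≤ _
    calc |w.re ^ 2 - (s - d ^ 2)| = |(‖w‖ ^ 2 - s) - (w.im - d) * (w.im + d)| := by
          rw [Complex.sq_norm, Complex.normSq_apply]; ring_nf
      _ ≤ |‖w‖ ^ 2 - s| + |w.im - d| * |w.im + d| := by rw [← abs_mul]; exact abs_sub _ _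
      _ ≤ h + a * (2 * |d| + a) := by gcongr; exact (abs_nonneg _).trans him
  calc _ ≤ volume (Complex.measurableEquivRealProd ⁻¹' (R ×ˢ Metric.closedBall d a)) :=
        measure_mono hsub
    _ = volume R * volume (Metric.closedBall d a) := by
        rw [Complex.volume_preserving_equiv_real_prod.measure_preimage_equiv,
          Measure.volume_eq_prod, Measure.prod_prod]
    _ ≤ _ := by
        rw [Real.volume_closedBall]
        gcongr
        exact volume_setOf_abs_sq_sub_le _ _

lemma volume_setOf_div_mem {p : ℂ} (hp : p ≠ 0) (W : Set ℂ) :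
    volume {q | q / p ∈ W} = ENNReal.ofReal (‖p‖ ^ 2) * volume W := by
  have hdet : LinearMap.det (LinearMap.mulLeft ℝ p⁻¹) = (‖p‖ ^ 2)⁻¹ := by
    change LinearMap.det (Algebra.lmul ℝ ℂ p⁻¹) = _
    rw [← Algebra.norm_apply, Algebra.norm_complex_apply, map_inv₀, Complex.sq_norm]
  have hne : LinearMap.det (LinearMap.mulLeft ℝ p⁻¹) ≠ 0 := by
    rw [hdet]; simpa using hp
  calc volume {q | q / p ∈ W} = volume (LinearMap.mulLeft ℝ p⁻¹ ⁻¹' W) := by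
        simp_rw [div_eq_inv_mul]; rfl
    _ = _ := by
        rw [Measure.addHaar_preimage_linearMap _ hne, hdet, inv_inv, abs_of_nonneg (by positivity)]

lemma volume_setOf_div_mem_of_norm_le {W : Set ℂ} (hW : MeasurableSet W) (r : ℝ) :
    volume {z : ℂ × ℂ | z.1 ≠ 0 ∧ ‖z.1‖ ≤ r ∧ z.2 / z.1 ∈ W} ≤
      ENNReal.ofReal (r ^ 2) * volume W * volume (Metric.closedBall (0 : ℂ) r) := by
  have hmeas : MeasurableSet {z : ℂ × ℂ | z.1 ≠ 0 ∧ ‖z.1‖ ≤ r ∧ z.2 / z.1 ∈ W} :=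
    (measurable_fst (measurableSet_singleton 0).compl).inter
      ((measurableSet_le measurable_fst.norm measurable_const).inter
        ((measurable_snd.div measurable_fst) hW))
  rw [Measure.volume_eq_prod, Measure.prod_apply hmeas, ← lintegral_indicator_const
    Metric.isClosed_closedBall.measurableSet]
  refine lintegral_mono fun p ↦ ?_
  by_cases hp : p ≠ 0 ∧ ‖p‖ ≤ r
  · rw [indicator_of_mem (by simpa using hp.2)]
    calc volume {q | p ≠ 0 ∧ ‖p‖ ≤ r ∧ q / p ∈ W} ≤ volume {q | q / p ∈ W} :=
          measure_mono fun q hq ↦ hq.2.2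
      _ = ENNReal.ofReal (‖p‖ ^ 2) * volume W := volume_setOf_div_mem hp.1 W
      _ ≤ ENNReal.ofReal (r ^ 2) * volume W := by gcongr; exact hp.2
  · have hempty : Prod.mk p ⁻¹' {z : ℂ × ℂ | z.1 ≠ 0 ∧ ‖z.1‖ ≤ r ∧ z.2 / z.1 ∈ W} = ∅ :=
      eq_empty_of_forall_notMem fun q hq ↦ hp ⟨hq.1, hq.2.1⟩
    rw [hempty, measure_empty]
    exact zero_le

/-! ### Matrices with complex columns -/

/-- The vector `u` of `ℝ²` as a complex number. -/
def toComplex (u : Fin 2 → ℝ) : ℂ := ⟨u 0, u 1⟩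

/-- The area form on `ℝ²`: the determinant of the matrix with columns `v` and `v'`. -/
def wedge (v v' : Fin 2 → ℝ) : ℝ := v 0 * v' 1 - v 1 * v' 0

/-- The real matrix whose columns are the complex numbers `z.1` and `z.2`. This is the coordinate
system in which Lebesgue measure on `2 × 2` matrices is taken. -/
def ofColumns (z : ℂ × ℂ) : Matrix (Fin 2) (Fin 2) ℝ := !![z.1.re, z.2.re; z.1.im, z.2.im]

/-- Right multiplication by `A` on `2 × 2` real matrices given by their complex columns; it is
`ℂ`-linear. -/
noncomputable def mulRight (A : Matrix (Fin 2) (Fin 2) ℝ) : ℂ × ℂ →ₗ[ℂ] ℂ × ℂ :=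
  Matrix.toLin (Module.Basis.finTwoProd ℂ) (Module.Basis.finTwoProd ℂ)
    !![(A 0 0 : ℂ), A 1 0; A 0 1, A 1 1]

lemma mulRight_apply (A : Matrix (Fin 2) (Fin 2) ℝ) (z : ℂ × ℂ) :
    mulRight A z = (A 0 0 * z.1 + A 1 0 * z.2, A 0 1 * z.1 + A 1 1 * z.2) :=
  Matrix.toLin_finTwoProd_apply _ _ _ _ _

lemma det_mulRight (A : Matrix (Fin 2) (Fin 2) ℝ) : LinearMap.det (mulRight A) = A.det := by
  rw [mulRight, LinearMap.det_toLin, Matrix.det_fin_two_of, Matrix.det_fin_two]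
  push_cast
  ring

lemma ofColumns_mulRight (A : Matrix (Fin 2) (Fin 2) ℝ) (z : ℂ × ℂ) :
    ofColumns (mulRight A z) = ofColumns z * A := by
  ext i j
  fin_cases i <;> fin_cases j <;>
    simp [ofColumns, mulRight_apply, Matrix.mul_apply, Fin.sum_univ_two, mul_comm]

lemma toComplex_smul (s : ℝ) (u : Fin 2 → ℝ) : toComplex (s • u) = s * toComplex u := by
  apply Complex.ext <;> simp [toComplex]

lemma toComplex_ofColumns_mulVec (z : ℂ × ℂ) (u : Fin 2 → ℝ) :
    toComplex (ofColumns z *ᵥ u) = u 0 * z.1 + u 1 * z.2 := by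
  apply Complex.ext <;>
    simp [toComplex, ofColumns, Matrix.mulVec, dotProduct, Fin.sum_univ_two, mul_comm]

instance : (volume : Measure (ℂ × ℂ)).IsAddHaarMeasure := by
  rw [Measure.volume_eq_prod]; infer_instance

lemma volume_preimage_mulRight {A : Matrix (Fin 2) (Fin 2) ℝ} (hA : A.det ≠ 0)
    (S : Set (ℂ × ℂ)) :
    volume (mulRight A ⁻¹' S) = ENNReal.ofReal ((A.det ^ 2)⁻¹) * volume S := by
  have hdet : LinearMap.det ((mulRight A).restrictScalars ℝ) = A.det ^ 2 := by
    rw [LinearMap.det_restrictScalars, det_mulRight, Algebra.norm_complex_apply,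
      Complex.normSq_ofReal, sq]
  have h := Measure.addHaar_preimage_linearMap volume
    (f := (mulRight A).restrictScalars ℝ) (by rw [hdet]; positivity) S
  rwa [hdet, abs_of_nonneg (by positivity)] at h

lemma norm_toComplex (u : Fin 2 → ℝ) : ‖toComplex u‖ = vnorm u := by
  rw [Complex.norm_def, Complex.normSq_apply, vnorm, toComplex, sq, sq]

lemma vnorm_sq (u : Fin 2 → ℝ) : vnorm u ^ 2 = u 0 ^ 2 + u 1 ^ 2 := Real.sq_sqrt (by positivity)

lemma im_toComplex_div (v v' : Fin 2 → ℝ) :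
    (toComplex v' / toComplex v).im = wedge v v' / vnorm v ^ 2 := by
  rw [Complex.div_im, Complex.normSq_apply, vnorm_sq, toComplex, toComplex, wedge]
  ring

lemma wedge_mulVec (A : Matrix (Fin 2) (Fin 2) ℝ) (v v' : Fin 2 → ℝ) :
    wedge (A *ᵥ v) (A *ᵥ v') = A.det * wedge v v' := by
  simp only [wedge, Matrix.mulVec, dotProduct, Fin.sum_univ_two, Matrix.det_fin_two]
  ring

lemma abs_wedge_le (v v' : Fin 2 → ℝ) : |wedge v v'| ≤ vnorm v * vnorm v' := by
  have hnonneg : 0 ≤ vnorm v * vnorm v' := mul_nonneg (Real.sqrt_nonneg _) (Real.sqrt_nonneg _)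
  refine abs_le_of_sq_le_sq ?_ hnonneg
  rw [mul_pow, vnorm_sq, vnorm_sq, wedge]
  linarith [sq_nonneg (v 0 * v' 0 + v 1 * v' 1)]

lemma vnorm_sub_sq_mul_vnorm_add_sq (v v' : Fin 2 → ℝ) :
    vnorm (v - v') ^ 2 * vnorm (v + v') ^ 2 =
      (vnorm v ^ 2 - vnorm v' ^ 2) ^ 2 + 4 * wedge v v' ^ 2 := by
  simp only [vnorm_sq, wedge, Pi.sub_apply, Pi.add_apply]
  ring

lemma vnorm_mulVec_le (A : Matrix (Fin 2) (Fin 2) ℝ) (u : Fin 2 → ℝ) :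
    vnorm (A *ᵥ u) ≤ opNorm A * vnorm u := by
  have h := (Matrix.toEuclideanCLM (𝕜 := ℝ) A).le_opNorm (WithLp.toLp 2 u)
  simpa only [Matrix.toEuclideanCLM_toLp, EuclideanSpace.norm_eq, Fin.sum_univ_two,
    Real.norm_eq_abs, sq_abs, vnorm, opNorm] using h

lemma abs_det_mul_vnorm_le (A : Matrix (Fin 2) (Fin 2) ℝ) (u : Fin 2 → ℝ) :
    |A.det| * vnorm u ≤ opNorm A * vnorm (A *ᵥ u) := by
  set u' : Fin 2 → ℝ := ![-u 1, u 0]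
  have hnorm : vnorm u' = vnorm u := by simp [u', vnorm, add_comm]
  have hwedge : wedge u u' = vnorm u ^ 2 := by
    simp only [u', wedge, vnorm_sq, Matrix.cons_val_zero, Matrix.cons_val_one]
    ring
  rcases (show 0 ≤ vnorm u from Real.sqrt_nonneg _).eq_or_lt with hu | hu
  · rw [← hu, mul_zero]
    exact mul_nonneg (norm_nonneg _) (Real.sqrt_nonneg _)
  refine le_of_mul_le_mul_right ?_ hu
  calc |A.det| * vnorm u * vnorm u = |wedge (A *ᵥ u) (A *ᵥ u')| := by
        rw [wedge_mulVec, hwedge, abs_mul, abs_of_nonneg (sq_nonneg (vnorm u))]; ring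
    _ ≤ vnorm (A *ᵥ u) * vnorm (A *ᵥ u') := abs_wedge_le _ _
    _ ≤ vnorm (A *ᵥ u) * (opNorm A * vnorm u) := by
        gcongr
        · exact Real.sqrt_nonneg _
        · exact (vnorm_mulVec_le A u').trans_eq (by rw [hnorm])
    _ = opNorm A * vnorm (A *ᵥ u) * vnorm u := by ring

/-! ### Left-invariant measures and cones -/

lemma measure_mul_measure_eq_lintegral_translates {X G : Type*} [MeasurableSpace X]
    [MeasurableSpace G] [Mul G] [MeasurableMul₂ G] {ν : Measure X} [SFinite ν] {μ : Measure G}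
    [SFinite μ] {b : X → G} (hb : Measurable b) {U : Set X} (hU : MeasurableSet U) {E : Set G}
    (hE : MeasurableSet E) (hinv : ∀ x ∈ U, μ.map (b x * ·) = μ) :
    ν U * μ E = ∫⁻ g, ν {x | x ∈ U ∧ b x * g ∈ E} ∂μ := by
  set S : Set (X × G) := {y | y.1 ∈ U ∧ b y.1 * y.2 ∈ E}
  have hS : MeasurableSet S :=
    (measurable_fst hU).inter (((hb.comp measurable_fst).mul measurable_snd) hE)
  have hslice (x : X) : μ (Prod.mk x ⁻¹' S) = U.indicator (fun _ ↦ μ E) x := by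
    by_cases hx : x ∈ U
    · have hpre : Prod.mk x ⁻¹' S = (b x * ·) ⁻¹' E := by ext g; simp [S, hx]
      rw [indicator_of_mem hx, hpre, ← Measure.map_apply (measurable_const_mul _) hE, hinv x hx]
    · have hpre : Prod.mk x ⁻¹' S = ∅ := by ext g; simp [S, hx]
      rw [indicator_of_notMem hx, hpre, measure_empty]
  calc ν U * μ E = ∫⁻ x, μ (Prod.mk x ⁻¹' S) ∂ν := by
        simp_rw [hslice]; rw [lintegral_indicator_const hU, mul_comm]
    _ = ∫⁻ g, ν {x | x ∈ U ∧ b x * g ∈ E} ∂μ := by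
        rw [← Measure.prod_apply hS, Measure.prod_apply_symm hS]; rfl

instance : LocallyCompactSpace (Matrix (Fin 2) (Fin 2) ℝ) :=
  inferInstanceAs (LocallyCompactSpace (Fin 2 → Fin 2 → ℝ))

/-- The rescaling of a `2 × 2` matrix of positive determinant to determinant one. -/
noncomputable def unimodularPart (A : Matrix (Fin 2) (Fin 2) ℝ) : Matrix (Fin 2) (Fin 2) ℝ :=
  (√A.det)⁻¹ • A

/-- The part `{t γ | γ ∈ E, 0 < t < √2}` of the cone over a set `E` of matrices of determinant one,
in column coordinates. -/
def unitCone (E : Set (Matrix (Fin 2) (Fin 2) ℝ)) : Set (ℂ × ℂ) :=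
  {z | (ofColumns z).det ∈ Ioo 0 2 ∧ unimodularPart (ofColumns z) ∈ E}

lemma det_unimodularPart {A : Matrix (Fin 2) (Fin 2) ℝ} (hA : 0 < A.det) :
    (unimodularPart A).det = 1 := by
  rw [unimodularPart, Matrix.det_smul, Fintype.card_fin, inv_pow, Real.sq_sqrt hA.le,
    inv_mul_cancel₀ hA.ne']

lemma unimodularPart_mul (A : Matrix (Fin 2) (Fin 2) ℝ) {B : Matrix (Fin 2) (Fin 2) ℝ}
    (hB : B.det = 1) : unimodularPart (A * B) = unimodularPart A * B := by
  rw [unimodularPart, unimodularPart, Matrix.det_mul, hB, mul_one, Matrix.smul_mul]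

lemma continuousOn_unimodularPart : ContinuousOn unimodularPart {A | 0 < A.det} :=
  ((continuous_id.matrix_det.sqrt).continuousOn.inv₀ fun _ hA ↦ (Real.sqrt_pos.2 hA).ne').smul
    continuousOn_id

lemma measurable_unimodularPart : Measurable unimodularPart :=
  (continuous_id.matrix_det.sqrt.measurable.inv).smul measurable_id

lemma continuous_ofColumns : Continuous ofColumns := by
  refine continuous_matrix fun i j ↦ ?_
  fin_cases i <;> fin_cases j
  exacts [Complex.continuous_re.comp continuous_fst, Complex.continuous_re.comp continuous_snd,
    Complex.continuous_im.comp continuous_fst, Complex.continuous_im.comp continuous_snd]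

lemma volume_setOf_unimodularPart_mul_mem_le {U : Set (ℂ × ℂ)}
    (hU : ∀ z ∈ U, (ofColumns z).det ∈ Ioo 0 2) (E : Set (Matrix (Fin 2) (Fin 2) ℝ))
    {A : Matrix (Fin 2) (Fin 2) ℝ} (hA : A.det = 1) :
    volume {z | z ∈ U ∧ unimodularPart (ofColumns z) * A ∈ E} ≤ volume (unitCone E) :=
  calc volume {z | z ∈ U ∧ unimodularPart (ofColumns z) * A ∈ E}
      ≤ volume (mulRight A ⁻¹' unitCone E) := by
        refine measure_mono fun z hz ↦ ?_
        rw [mem_preimage, unitCone, mem_ofPred_eq, ofColumns_mulRight, unimodularPart_mul _ hA,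
          Matrix.det_mul, hA, mul_one]
        exact ⟨hU z hz.1, hz.2⟩
    _ = volume (unitCone E) := by
        rw [volume_preimage_mulRight (by rw [hA]; exact one_ne_zero), hA]; simp

lemma exists_isCompact_interior_nonempty_det_mem :
    ∃ U : Set (ℂ × ℂ), IsCompact U ∧ (interior U).Nonempty ∧
      ∀ z ∈ U, (ofColumns z).det ∈ Ioo 0 2 := by
  have hopen : IsOpen {z : ℂ × ℂ | (ofColumns z).det ∈ Ioo (0 : ℝ) 2} :=
    isOpen_Ioo.preimage continuous_ofColumns.matrix_det
  have hone : ((1, Complex.I) : ℂ × ℂ) ∈ {z | (ofColumns z).det ∈ Ioo (0 : ℝ) 2} := by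
    simp [ofColumns]
  obtain ⟨U, hU, hmem, hsub⟩ := exists_compact_subset hopen hone
  exact ⟨U, hU, ⟨_, hmem⟩, hsub⟩

lemma exists_isCompact_forall_mem_of_mul_mem {X n : Type*} [TopologicalSpace X] [Fintype n]
    [DecidableEq n] {b : X → Matrix n n ℝ} {U : Set X} (hU : IsCompact U) (hb : ContinuousOn b U)
    (hdet : ∀ x ∈ U, (b x).det = 1) {K : Set (Matrix n n ℝ)} (hK : IsCompact K) :
    ∃ L, IsCompact L ∧ ∀ x ∈ U, ∀ A, b x * A ∈ K → A ∈ L := by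
  refine ⟨(fun y : X × Matrix n n ℝ ↦ (b y.1).adjugate * y.2) '' (U ×ˢ K),
    (hU.prod hK).image_of_continuousOn (ContinuousOn.mul ?_ continuousOn_snd),
    fun x hx A hA ↦ ⟨(x, b x * A), ⟨hx, hA⟩, ?_⟩⟩
  · exact (continuous_id.matrix_adjugate.comp_continuousOn hb).comp continuousOn_fst
      fun y hy ↦ hy.1
  · simp only [← Matrix.mul_assoc, Matrix.adjugate_mul, hdet x hx, one_smul, Matrix.one_mul]

lemma exists_measure_le_mul_volume_unitCone {μ : Measure (Matrix (Fin 2) (Fin 2) ℝ)}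
    [IsFiniteMeasureOnCompacts μ]
    (hinv : ∀ B : Matrix (Fin 2) (Fin 2) ℝ, B.det = 1 → μ.map (fun A ↦ B * A) = μ)
    {K : Set (Matrix (Fin 2) (Fin 2) ℝ)} (hK : IsCompact K) (hdet : ∀ A ∈ K, A.det = 1) :
    ∃ c : NNReal, ∀ E ⊆ K, MeasurableSet E → μ E ≤ c * volume (unitCone E) := by
  obtain ⟨U, hUcompact, hUint, hUdet⟩ := exists_isCompact_interior_nonempty_det_mem
  have hU0 : volume U ≠ 0 := (Measure.measure_pos_of_nonempty_interior _ hUint).ne'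
  set b : ℂ × ℂ → Matrix (Fin 2) (Fin 2) ℝ := fun z ↦ unimodularPart (ofColumns z)
  have hbdet {z : ℂ × ℂ} (hz : z ∈ U) : (b z).det = 1 := det_unimodularPart (hUdet z hz).1
  have hbcont : ContinuousOn b U :=
    continuousOn_unimodularPart.comp continuous_ofColumns.continuousOn fun z hz ↦ (hUdet z hz).1
  obtain ⟨L, hL, mem_L⟩ := exists_isCompact_forall_mem_of_mul_mem hUcompact hbcont
    (fun z ↦ hbdet) hK
  refine ⟨(μ L / volume U).toNNReal, fun E hEK hE ↦ ?_⟩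
  rw [ENNReal.coe_toNNReal (ENNReal.div_ne_top hL.measure_lt_top.ne hU0), div_eq_mul_inv,
    mul_right_comm, ← div_eq_mul_inv, ENNReal.le_div_iff_mul_le (.inl hU0)
    (.inl hUcompact.measure_lt_top.ne), mul_comm]
  calc volume U * μ E = ∫⁻ A, volume {z | z ∈ U ∧ b z * A ∈ E} ∂μ :=
        measure_mul_measure_eq_lintegral_translates
          (measurable_unimodularPart.comp continuous_ofColumns.measurable)
          hUcompact.measurableSet hE fun z hz ↦ hinv _ (hbdet hz)
    _ ≤ ∫⁻ A, L.indicator (fun _ ↦ volume (unitCone E)) A ∂μ := by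
        refine lintegral_mono fun A ↦ ?_
        rcases {z | z ∈ U ∧ b z * A ∈ E}.eq_empty_or_nonempty with hempty | ⟨z, hz, hzA⟩
        · rw [hempty, measure_empty]
          exact zero_le
        have hA : A.det = 1 := by
          simpa only [Matrix.det_mul, hbdet hz, one_mul] using hdet _ (hEK hzA)
        rw [indicator_of_mem (mem_L z hz A (hEK hzA))]
        exact volume_setOf_unimodularPart_mul_mem_le hUdet E hA
    _ = μ L * volume (unitCone E) := by
        rw [lintegral_indicator_const hL.measurableSet, mul_comm]

/-! ### The sets `E(v, v', τ)` -/

/-- The ratios `γ v' / γ v` of complex numbers allowed for `γ ∈ E(v, v', τ)`, where `d = v ∧ v'`. -/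
def ratioWindow (d τ : ℝ) : Set ℂ := {w | |‖w‖ ^ 2 - 1| ≤ 8 * τ ∧ |w.im - d| ≤ 8 * τ}

lemma measurableSet_ratioWindow (d τ : ℝ) : MeasurableSet (ratioWindow d τ) :=
  ((isClosed_le ((continuous_norm.pow 2).sub continuous_const).abs continuous_const).and
    (isClosed_le (Complex.continuous_im.sub continuous_const).abs continuous_const)).measurableSet

lemma volume_ratioWindow_le {d τ : ℝ} (hd : |d| ≤ 2) (hτ : 0 ≤ τ) (hτ' : τ ≤ 1 / 4) :
    volume (ratioWindow d τ) ≤ ENNReal.ofReal (384 * (τ * √τ)) := by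
  have hsqrt : √(2 * (8 * τ + 8 * τ * (2 * |d| + 8 * τ))) ≤ 12 * √τ := by
    rw [Real.sqrt_le_left (by positivity), mul_pow, Real.sq_sqrt hτ]
    nlinarith
  calc volume (ratioWindow d τ)
      ≤ ENNReal.ofReal (2 * √(2 * (8 * τ + 8 * τ * (2 * |d| + 8 * τ)))) *
          ENNReal.ofReal (2 * (8 * τ)) := volume_setOf_normSq_im_near_le 1 d (8 * τ) (8 * τ)
    _ ≤ ENNReal.ofReal (2 * (12 * √τ)) * ENNReal.ofReal (2 * (8 * τ)) := by gcongr
    _ = ENNReal.ofReal (384 * (τ * √τ)) := by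
        rw [← ENNReal.ofReal_mul (by positivity)]; ring_nf

lemma isCompact_setOf_det_eq_one_opNorm_le (R : ℝ) :
    IsCompact {A : Matrix (Fin 2) (Fin 2) ℝ | A.det = 1 ∧ opNorm A ≤ R} := by
  let e := (Matrix.toEuclideanCLM (n := Fin 2) (𝕜 := ℝ)).toAlgEquiv.toLinearEquiv
    |>.toContinuousLinearEquiv
  have hball : IsCompact {A : Matrix (Fin 2) (Fin 2) ℝ | opNorm A ≤ R} := by
    have h := e.toHomeomorph.isCompact_preimage.2 (isCompact_closedBall 0 R)
    convert h using 1
    ext A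
    simp [opNorm, e]
  exact hball.inter_left (isClosed_eq continuous_id.matrix_det continuous_const)

section Eset

variable {v v' : Fin 2 → ℝ} {τ : ℝ}

lemma measurableSet_Eset : MeasurableSet (Eset v v' τ) := by
  have hvnorm (u : Fin 2 → ℝ) :
      Continuous fun A : Matrix (Fin 2) (Fin 2) ℝ ↦ vnorm (A *ᵥ u) := by
    unfold vnorm; fun_prop
  have hclosed : IsClosed {A : Matrix (Fin 2) (Fin 2) ℝ |
      exp (-τ) ≤ vnorm (A *ᵥ v) ∧ vnorm (A *ᵥ v) ≤ exp τ ∧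
        exp (-τ) ≤ vnorm (A *ᵥ v') ∧ vnorm (A *ᵥ v') ≤ exp τ} :=
    (isClosed_le continuous_const (hvnorm v)).and <|
      (isClosed_le (hvnorm v) continuous_const).and <|
        (isClosed_le continuous_const (hvnorm v')).and (isClosed_le (hvnorm v') continuous_const)
  convert ((isCompact_setOf_det_eq_one_opNorm_le 2).inter_right hclosed).measurableSet using 1
  ext A
  simp only [Eset, mem_inter_iff, mem_ofPred_eq, and_assoc]

variable {γ : Matrix (Fin 2) (Fin 2) ℝ}

lemma vnorm_pos_and_abs_log_le_of_mem_Eset (hγ : γ ∈ Eset v v' τ) :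
    (0 < vnorm (γ *ᵥ v) ∧ |log (vnorm (γ *ᵥ v))| ≤ τ) ∧
      (0 < vnorm (γ *ᵥ v') ∧ |log (vnorm (γ *ᵥ v'))| ≤ τ) := by
  have log_bound {x : ℝ} (hl : exp (-τ) ≤ x) (hu : x ≤ exp τ) : 0 < x ∧ |log x| ≤ τ := by
    have hx : 0 < x := (exp_pos _).trans_le hl
    exact ⟨hx, abs_le.2 ⟨(le_log_iff_exp_le hx).2 hl, (log_le_iff_le_exp hx).2 hu⟩⟩
  obtain ⟨-, -, hl, hu, hl', hu'⟩ := hγ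
  exact ⟨log_bound hl hu, log_bound hl' hu'⟩

lemma abs_vnorm_sq_sub_one_le_of_mem_Eset (hτ : τ ≤ 1 / 4) (hγ : γ ∈ Eset v v' τ) :
    |vnorm (γ *ᵥ v) ^ 2 - 1| ≤ 4 * τ ∧ |vnorm (γ *ᵥ v') ^ 2 - 1| ≤ 4 * τ := by
  have sq_bound {x : ℝ} (hx : 0 < x ∧ |log x| ≤ τ) : |x ^ 2 - 1| ≤ 4 * τ := by
    have hlog : |log (x ^ 2)| ≤ 2 * τ := by
      rw [log_pow, abs_mul]; simpa using hx.2
    linarith [abs_sub_one_le_of_abs_log_le (pow_pos hx.1 2) hlog (by linarith)]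
  obtain ⟨hv, hv'⟩ := vnorm_pos_and_abs_log_le_of_mem_Eset hγ
  exact ⟨sq_bound hv, sq_bound hv'⟩

lemma abs_wedge_le_of_mem_Eset (hτ : τ ≤ 1 / 4) (hγ : γ ∈ Eset v v' τ) : |wedge v v'| ≤ 2 := by
  obtain ⟨hv, hv'⟩ := abs_vnorm_sq_sub_one_le_of_mem_Eset hτ hγ
  calc |wedge v v'| = |wedge (γ *ᵥ v) (γ *ᵥ v')| := by rw [wedge_mulVec, hγ.1, one_mul]
    _ ≤ vnorm (γ *ᵥ v) * vnorm (γ *ᵥ v') := abs_wedge_le _ _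
    _ ≤ 2 := by
        nlinarith [sq_nonneg (vnorm (γ *ᵥ v) - vnorm (γ *ᵥ v')), (abs_le.1 hv).2, (abs_le.1 hv').2]

lemma le_wedge_sq_of_mem_Eset {δ : ℝ} (hδ : 0 ≤ δ) (hsub : δ ≤ vnorm (v - v'))
    (hadd : δ ≤ vnorm (v + v')) (hτ : τ ≤ 1 / 4) (hτδ : τ ≤ δ ^ 2 / 64) (hγ : γ ∈ Eset v v' τ) :
    δ ^ 4 / 128 ≤ wedge v v' ^ 2 := by
  have expand {u : Fin 2 → ℝ} (hu : δ ≤ vnorm u) : δ / 2 ≤ vnorm (γ *ᵥ u) := by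
    have h := abs_det_mul_vnorm_le γ u
    rw [hγ.1, abs_one, one_mul] at h
    have hop : opNorm γ * vnorm (γ *ᵥ u) ≤ 2 * vnorm (γ *ᵥ u) :=
      mul_le_mul_of_nonneg_right hγ.2.1 (Real.sqrt_nonneg _)
    linarith
  have hprod : (δ / 2) ^ 2 * (δ / 2) ^ 2 ≤
      vnorm (γ *ᵥ v - γ *ᵥ v') ^ 2 * vnorm (γ *ᵥ v + γ *ᵥ v') ^ 2 := by
    rw [← Matrix.mulVec_sub, ← Matrix.mulVec_add]
    gcongr
    exacts [expand hsub, expand hadd]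
  rw [vnorm_sub_sq_mul_vnorm_add_sq, wedge_mulVec, hγ.1, one_mul] at hprod
  obtain ⟨hv, hv'⟩ := abs_vnorm_sq_sub_one_le_of_mem_Eset hτ hγ
  have hdiff : (vnorm (γ *ᵥ v) ^ 2 - vnorm (γ *ᵥ v') ^ 2) ^ 2 ≤ (δ ^ 2 / 8) ^ 2 := by
    rw [abs_le] at hv hv'
    apply sq_le_sq' <;> linarith
  nlinarith [pow_nonneg hδ 4]

lemma toComplex_div_mem_ratioWindow (hτ : τ ≤ 1 / 4) (hγ : γ ∈ Eset v v' τ) :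
    toComplex (γ *ᵥ v') / toComplex (γ *ᵥ v) ∈ ratioWindow (wedge v v') τ := by
  obtain ⟨⟨hpos, hlog⟩, hpos', hlog'⟩ := vnorm_pos_and_abs_log_le_of_mem_Eset hγ
  set r := vnorm (γ *ᵥ v)
  set r' := vnorm (γ *ᵥ v')
  rw [abs_le] at hlog hlog'
  constructor
  · have hratio : |log ((r' / r) ^ 2)| ≤ 4 * τ := by
      rw [log_pow, log_div hpos'.ne' hpos.ne', abs_le]
      push_cast
      constructor <;> linarith
    rw [norm_div, norm_toComplex, norm_toComplex]
    linarith [abs_sub_one_le_of_abs_log_le (by positivity) hratio (by linarith)]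
  · have hinv : |log ((r ^ 2)⁻¹)| ≤ 2 * τ := by
      rw [log_inv, log_pow, abs_le]
      push_cast
      constructor <;> linarith
    rw [im_toComplex_div, wedge_mulVec, hγ.1, one_mul]
    calc |wedge v v' / r ^ 2 - wedge v v'| = |wedge v v'| * |(r ^ 2)⁻¹ - 1| := by
          rw [← abs_mul]; ring_nf
      _ ≤ 2 * (2 * (2 * τ)) := by
          gcongr
          · exact abs_wedge_le_of_mem_Eset hτ hγ
          · exact abs_sub_one_le_of_abs_log_le (by positivity) hinv (by linarith)
      _ = 8 * τ := by ring

lemma mulRight_mem_of_mem_unitCone_Eset (hτ : τ ≤ 1 / 4) {z : ℂ × ℂ}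
    (hz : z ∈ unitCone (Eset v v' τ)) :
    mulRight !![v 0, v' 0; v 1, v' 1] z ∈
      {y : ℂ × ℂ | y.1 ≠ 0 ∧ ‖y.1‖ ≤ 2 ∧ y.2 / y.1 ∈ ratioWindow (wedge v v') τ} := by
  obtain ⟨⟨hdet0, hdet2⟩, hγ⟩ := hz
  set γ := unimodularPart (ofColumns z)
  set s := √(ofColumns z).det
  have hs : 0 < s := Real.sqrt_pos.2 hdet0
  have hsq : s ^ 2 ≤ 2 := (Real.sq_sqrt hdet0.le).trans_le hdet2.le
  have hcone : ofColumns z = s • γ := (smul_inv_smul₀ hs.ne' _).symm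
  have hcol (u : Fin 2 → ℝ) : u 0 * z.1 + u 1 * z.2 = s * toComplex (γ *ᵥ u) := by
    rw [← toComplex_ofColumns_mulVec, hcone, Matrix.smul_mulVec, toComplex_smul]
  have himage : mulRight !![v 0, v' 0; v 1, v' 1] z =
      (s * toComplex (γ *ᵥ v), s * toComplex (γ *ᵥ v')) := by
    rw [mulRight_apply, ← hcol, ← hcol]; simp
  have hpos := (vnorm_pos_and_abs_log_le_of_mem_Eset hγ).1.1
  have hnorm := (abs_le.1 (abs_vnorm_sq_sub_one_le_of_mem_Eset hτ hγ).1).2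
  have hs0 : (s : ℂ) ≠ 0 := Complex.ofReal_ne_zero.2 hs.ne'
  rw [himage]
  refine ⟨mul_ne_zero hs0 ?_, ?_, ?_⟩
  · rwa [← norm_pos_iff, norm_toComplex]
  · rw [norm_mul, Complex.norm_real, Real.norm_of_nonneg hs.le, norm_toComplex]
    nlinarith [sq_nonneg (s - vnorm (γ *ᵥ v))]
  · rw [mul_div_mul_left _ _ hs0]
    exact toComplex_div_mem_ratioWindow hτ hγ

lemma volume_unitCone_Eset_le (hd : wedge v v' ≠ 0) (hd' : |wedge v v'| ≤ 2) (hτ : 0 ≤ τ)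
    (hτ' : τ ≤ 1 / 4) :
    volume (unitCone (Eset v v' τ)) ≤
      ENNReal.ofReal (6144 * π * (wedge v v' ^ 2)⁻¹ * (τ * √τ)) := by
  have hdet : !![v 0, v' 0; v 1, v' 1].det = wedge v v' := by
    rw [Matrix.det_fin_two_of, wedge]; ring
  have hball : volume (Metric.closedBall (0 : ℂ) 2) = ENNReal.ofReal (4 * π) := by
    rw [Complex.volume_closedBall, ← ENNReal.ofReal_coe_nnreal, ← ENNReal.ofReal_pow two_pos.le,
      ← ENNReal.ofReal_mul (by positivity), NNReal.coe_real_pi]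
    norm_num
  calc volume (unitCone (Eset v v' τ))
      ≤ volume (mulRight !![v 0, v' 0; v 1, v' 1] ⁻¹'
          {y | y.1 ≠ 0 ∧ ‖y.1‖ ≤ 2 ∧ y.2 / y.1 ∈ ratioWindow (wedge v v') τ}) :=
        measure_mono fun z ↦ mulRight_mem_of_mem_unitCone_Eset hτ'
    _ = ENNReal.ofReal ((wedge v v' ^ 2)⁻¹) *
          volume {y : ℂ × ℂ | y.1 ≠ 0 ∧ ‖y.1‖ ≤ 2 ∧ y.2 / y.1 ∈ ratioWindow (wedge v v') τ} := by
        rw [volume_preimage_mulRight (by rwa [hdet]), hdet]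
    _ ≤ ENNReal.ofReal ((wedge v v' ^ 2)⁻¹) *
          (ENNReal.ofReal (2 ^ 2) * volume (ratioWindow (wedge v v') τ) *
            volume (Metric.closedBall (0 : ℂ) 2)) := by
        gcongr
        exact volume_setOf_div_mem_of_norm_le (measurableSet_ratioWindow _ _) 2
    _ ≤ ENNReal.ofReal ((wedge v v' ^ 2)⁻¹) *
          (ENNReal.ofReal (2 ^ 2) * ENNReal.ofReal (384 * (τ * √τ)) * ENNReal.ofReal (4 * π)) := by
        rw [hball]
        gcongr
        exact volume_ratioWindow_le hd' hτ hτ'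
    _ = ENNReal.ofReal (6144 * π * (wedge v v' ^ 2)⁻¹ * (τ * √τ)) := by
        rw [← ENNReal.ofReal_mul (by positivity), ← ENNReal.ofReal_mul (by positivity),
          ← ENNReal.ofReal_mul (by positivity)]
        ring_nf

lemma measure_Eset_le_of_le_mul_volume_unitCone {μ : Measure (Matrix (Fin 2) (Fin 2) ℝ)}
    {c : NNReal} (hμ : μ (Eset v v' τ) ≤ c * volume (unitCone (Eset v v' τ))) {δ : ℝ} (hδ : 0 < δ)
    (hsub : δ ≤ vnorm (v - v')) (hadd : δ ≤ vnorm (v + v')) (hτ : 0 ≤ τ) (hτ' : τ ≤ 1 / 4)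
    (hτδ : τ ≤ δ ^ 2 / 64) :
    μ (Eset v v' τ) ≤ ENNReal.ofReal (c * (6144 * π * (δ ^ 4 / 128)⁻¹) * (τ * √τ)) := by
  rcases (Eset v v' τ).eq_empty_or_nonempty with hempty | ⟨γ, hγ⟩
  · rw [hempty, measure_empty]
    exact zero_le
  have hlower := le_wedge_sq_of_mem_Eset hδ.le hsub hadd hτ' hτδ hγ
  have hδ4 : 0 < δ ^ 4 / 128 := by positivity
  have hd : wedge v v' ≠ 0 := pow_ne_zero_iff two_ne_zero |>.1 (hδ4.trans_le hlower).ne'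
  calc μ (Eset v v' τ) ≤ c * volume (unitCone (Eset v v' τ)) := hμ
    _ ≤ c * ENNReal.ofReal (6144 * π * (wedge v v' ^ 2)⁻¹ * (τ * √τ)) := by
        gcongr
        exact volume_unitCone_Eset_le hd (abs_wedge_le_of_mem_Eset hτ' hγ) hτ hτ'
    _ ≤ c * ENNReal.ofReal (6144 * π * (δ ^ 4 / 128)⁻¹ * (τ * √τ)) := by gcongr
    _ = ENNReal.ofReal (c * (6144 * π * (δ ^ 4 / 128)⁻¹) * (τ * √τ)) := by
        rw [← ENNReal.ofReal_coe_nnreal, ← ENNReal.ofReal_mul c.coe_nonneg, mul_assoc (c : ℝ)]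

end Eset

/-- Proposition 3.3: the Haar measure of `E(v, v', τ)` is `O(τ^{3/2})` for small `τ`,
uniformly over `v, v'` with `‖v ± v'‖` bounded away from `0`. Haar measure on
`SL(2,ℝ)` is modelled as a nonzero measure on `2×2` matrices carried by
`{det = 1}`, finite on compact sets, and invariant under left translation. -/
theorem stmt5 (μ : Measure (Matrix (Fin 2) (Fin 2) ℝ))
    (hμ0 : μ ≠ 0)
    (hsupp : μ {A | A.det ≠ 1} = 0)
    (hcpt : ∀ K : Set (Matrix (Fin 2) (Fin 2) ℝ), IsCompact K → μ K < ⊤)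
    (hinv : ∀ B : Matrix (Fin 2) (Fin 2) ℝ, B.det = 1 →
      Measure.map (fun A => B * A) μ = μ) :
    ∀ δ > (0:ℝ), ∃ C > (0:ℝ), ∃ τ₀ > (0:ℝ), ∀ v v' : Fin 2 → ℝ,
      δ ≤ vnorm (v - v') → δ ≤ vnorm (v + v') →
      ∀ τ : ℝ, 0 < τ → τ < τ₀ →
        μ (Eset v v' τ) ≤ ENNReal.ofReal (C * τ ^ ((3:ℝ)/2)) := by
  intro δ hδ
  have : IsFiniteMeasureOnCompacts μ := ⟨fun K ↦ hcpt K⟩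
  obtain ⟨c, hc⟩ := exists_measure_le_mul_volume_unitCone hinv
    (isCompact_setOf_det_eq_one_opNorm_le 2) fun A hA ↦ hA.1
  refine ⟨c * (6144 * π * (δ ^ 4 / 128)⁻¹) + 1, by positivity,
    min (1 / 4) (δ ^ 2 / 64), by positivity, fun v v' hsub hadd τ hτ hτ₀ ↦ ?_⟩
  have hcone : μ (Eset v v' τ) ≤ c * volume (unitCone (Eset v v' τ)) :=
    hc _ (fun A hA ↦ ⟨hA.1, hA.2.1⟩) measurableSet_Eset
  have hpow : τ ^ ((3 : ℝ) / 2) = τ * √τ := by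
    rw [show (3 : ℝ) / 2 = 1 + 1 / 2 by norm_num, rpow_add hτ, rpow_one, sqrt_eq_rpow]
  rw [lt_min_iff] at hτ₀
  calc μ (Eset v v' τ) ≤ ENNReal.ofReal (c * (6144 * π * (δ ^ 4 / 128)⁻¹) * (τ * √τ)) :=
        measure_Eset_le_of_le_mul_volume_unitCone hcone hδ hsub hadd hτ.le hτ₀.1.le hτ₀.2.le
    _ ≤ ENNReal.ofReal ((c * (6144 * π * (δ ^ 4 / 128)⁻¹) + 1) * τ ^ ((3 : ℝ) / 2)) := by
        rw [hpow]; gcongr; linarith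
end
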